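/- Let E be a category with finite products and small colimits such that for every object C of E the functor C × (−) : E ⥤ E preserves small colimits. Let B be a small category with finite products, C a locally small category, F : B ⥤ C any functor, and X : B ⥤ E a functor preserving finite products. Then the pointwise left Kan extension Lan_F X : C ⥤ E preserves finite products (i.e., all finite products that exist in C). -/

import Mathlib

/-!
STATEMENT 13: Let `E` be a category with finite products and small colimits such that
`C × (−)` preserves small colimits for every object `C` of `E`. Let `B` be a small category
with finite products, `C` a locally small category, `F : B ⥤ C` any functor, and
`X : B ⥤ E` a functor preserving finite products. Then the pointwise left Kan extension
`Lan_F X : C ⥤ E` preserves finite products (all finite products that exist in `C`).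
-/

open CategoryTheory CategoryTheory.Limits

universe u v w e

/-!
Suppose first that `C` has finite products. Products in `E` preserve colimits in each variable, so
the external product `Lan_F X (c) × Lan_F X (c')` is a pointwise left Kan extension of
`X b × X b'` along `F × F`. On the other hand, the square formed by `F × F`, `F` and the two
product functors, with 2-cell `F (b × b') ⟶ F b × F b'`, is Guitart exact, so `Lan_F X (c × c')`
is a pointwise left Kan extension of `X (b × b')` along `F × F`. As `X` preserves binary products,
the comparison between the two is invertible. The terminal object is preserved because the comma
category `F / 1` has a terminal object lying over `1`.

If `C` lacks finite products, it is replaced by the presheaf category of `B`: the functor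
`N c = Hom (F -, c)` preserves all limits, and `Lan_F X ≅ N ⋙ Lan_y X` with `y` the Yoneda
embedding of `B`, since the square with 2-cell `Hom (-, b) ⟶ Hom (F -, F b)` is Guitart exact.
-/

open MonoidalCategory CartesianMonoidalCategory Functor

section GuitartExact

variable {C₁ C₂ C₃ C₄ : Type*} [Category* C₁] [Category* C₂] [Category* C₃] [Category* C₄]
  {T : C₁ ⥤ C₂} {L : C₁ ⥤ C₃} {R : C₂ ⥤ C₄} {B : C₃ ⥤ C₄}

theorem isConnected_of_nonempty_hom {J : Type*} [Category* J] (j₀ : J)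
    (h : ∀ j, Nonempty (j₀ ⟶ j)) : IsConnected J :=
  have : Nonempty J := ⟨j₀⟩
  zigzag_isConnected fun j₁ j₂ => Zigzag.of_inv_hom (h j₁).some (h j₂).some

theorem guitartExact_of_exists_weaklyInitial (w : TwoSquare T L R B)
    (h : ∀ ⦃X₂ : C₂⦄ ⦃X₃ : C₃⦄ (g : R.obj X₂ ⟶ B.obj X₃),
      ∃ (X₁ : C₁) (a : X₂ ⟶ T.obj X₁) (b : L.obj X₁ ⟶ X₃), R.map a ≫ w.app X₁ ≫ B.map b = g ∧
        ∀ ⦃X₁' : C₁⦄ (a' : X₂ ⟶ T.obj X₁') (b' : L.obj X₁' ⟶ X₃),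
          R.map a' ≫ w.app X₁' ≫ B.map b' = g →
            ∃ t : X₁ ⟶ X₁', a ≫ T.map t = a' ∧ L.map t ≫ b' = b) :
    w.GuitartExact := by
  refine (TwoSquare.guitartExact_iff_isConnected_rightwards w).2 fun g => ?_
  obtain ⟨X₁, a, b, comm, desc⟩ := h g
  refine isConnected_of_nonempty_hom (.mk w g X₁ a b comm) fun j => ?_
  obtain ⟨X₁', a', b', comm', rfl⟩ := TwoSquare.StructuredArrowRightwards.mk_surjective j
  obtain ⟨t, ha, hb⟩ := desc a' b' comm'
  exact ⟨StructuredArrow.homMk (CostructuredArrow.homMk t hb) (CostructuredArrow.hom_ext _ _ ha)⟩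

end GuitartExact

section ProdComparison

variable {C D : Type*} [Category* C] [Category* D]
  [CartesianMonoidalCategory C] [CartesianMonoidalCategory D]

/-- The square with 2-cell `F (c ⊗ c') ⟶ F c ⊗ F c'`; it expresses the compatibility of Kan
extensions along `F` and along `F × F` with products. -/
def prodComparisonTwoSquare (F : C ⥤ D) : TwoSquare (tensor C) (F.prod F) F (tensor D) :=
  TwoSquare.mk _ _ _ _
    { app := fun p => prodComparison F p.1 p.2
      naturality := fun _ _ f => prodComparison_natural F f.1 f.2 }

instance guitartExact_prodComparisonTwoSquare (F : C ⥤ D) :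
    (prodComparisonTwoSquare F).GuitartExact := by
  refine guitartExact_of_exists_weaklyInitial _ fun c d g =>
    ⟨(c, c), lift (𝟙 c) (𝟙 c), (g ≫ fst d.1 d.2, g ≫ snd d.1 d.2), ?_, ?_⟩
  · change F.map (lift (𝟙 c) (𝟙 c)) ≫ prodComparison F c c ≫
      ((g ≫ fst d.1 d.2) ⊗ₘ (g ≫ snd d.1 d.2)) = g
    ext <;> simp [← Functor.map_comp_assoc]
  · rintro ⟨c₁, c₂⟩ (a : c ⟶ c₁ ⊗ c₂) ⟨b₁, b₂⟩
      (rfl : F.map a ≫ prodComparison F c₁ c₂ ≫ (b₁ ⊗ₘ b₂) = g)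
    refine ⟨(a ≫ fst c₁ c₂, a ≫ snd c₁ c₂), ?_, ?_⟩
    · change lift (𝟙 c) (𝟙 c) ≫ ((a ≫ fst c₁ c₂) ⊗ₘ (a ≫ snd c₁ c₂)) = a
      ext <;> simp
    · ext <;> simp [Functor.prod]

end ProdComparison

section Yoneda

variable {B : Type*} [Category.{v} B] {C : Type*} [Category.{w} C]

/-- The square with 2-cell `Hom (-, b) ⟶ Hom (F -, F b)`, which relates Kan extensions along `F` to
Kan extensions along the Yoneda embedding. The hom-sets of `B` and `C` are lifted to a common
universe. -/
def uliftYonedaTwoSquare (F : B ⥤ C) :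
    TwoSquare (𝟭 B) F uliftYoneda.{w} (Presheaf.restrictedULiftYoneda.{v} F) :=
  TwoSquare.mk _ _ _ _
    { app _ :=
        { app _ := ↾fun f => ULift.up (F.map f.down)
          naturality _ _ g := by ext f; exact ULift.ext _ _ (F.map_comp g.unop f.down) }
      naturality _ _ g := by ext _ f; exact ULift.ext _ _ (F.map_comp f.down g) }

instance guitartExact_uliftYonedaTwoSquare (F : B ⥤ C) : (uliftYonedaTwoSquare F).GuitartExact := by
  refine guitartExact_of_exists_weaklyInitial _ fun b c g =>
    ⟨b, 𝟙 b, (uliftYonedaEquiv g).down, uliftYonedaEquiv.injective (ULift.ext _ _ ?_), ?_⟩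
  · change F.map (𝟙 b ≫ 𝟙 b) ≫ (uliftYonedaEquiv g).down = (uliftYonedaEquiv g).down
    simp
  · rintro b' a f rfl
    refine ⟨a, Category.id_comp a, ?_⟩
    change F.map a ≫ f = F.map (𝟙 b ≫ a) ≫ f
    simp

instance preservesFiniteProducts_restrictedULiftYoneda (F : B ⥤ C) :
    PreservesFiniteProducts (Presheaf.restrictedULiftYoneda.{v} F) :=
  inferInstanceAs (PreservesFiniteProducts (uliftYoneda.{v} ⋙ (whiskeringLeft _ _ _).obj F.op))

noncomputable def restrictedULiftYonedaCompIso {E : Type*} [Category* E] {F : B ⥤ C} {X : B ⥤ E}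
    {L : F.LeftExtension X} (hL : L.IsPointwiseLeftKanExtension)
    {Y : uliftYoneda.{w}.LeftExtension X} (hY : Y.IsPointwiseLeftKanExtension) :
    Presheaf.restrictedULiftYoneda.{v} F ⋙ Y.right ≅ L.right :=
  have := hL.isLeftKanExtension
  have := (hY.compTwoSquare (uliftYonedaTwoSquare F)).isLeftKanExtension
  leftKanExtensionUnique _ (Y.compTwoSquare (uliftYonedaTwoSquare F)).hom L.right L.hom

end Yoneda

section ExternalProduct

variable {B₁ B₂ C₁ C₂ V : Type*} [Category* B₁] [Category* B₂] [Category* C₁] [Category* C₂]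
  [Category* V] [MonoidalCategory V]
  {F₁ : B₁ ⥤ C₁} {F₂ : B₂ ⥤ C₂} {X₁ : B₁ ⥤ V} {X₂ : B₂ ⥤ V}

/-- The left extension `(c₁, c₂) ↦ L₁ c₁ ⊗ L₂ c₂` of `(b₁, b₂) ↦ X₁ b₁ ⊗ X₂ b₂` along `F₁ × F₂`. -/
abbrev leftExtensionTensor (L₁ : F₁.LeftExtension X₁) (L₂ : F₂.LeftExtension X₂) :
    (F₁.prod F₂).LeftExtension (X₁.prod X₂ ⋙ tensor V) :=
  .mk (L₁.right.prod L₂.right ⋙ tensor V)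
    (whiskerRight (NatTrans.prod L₁.hom L₂.hom) (tensor V))

noncomputable def isPointwiseLeftKanExtensionTensor
    {L₁ : F₁.LeftExtension X₁} {L₂ : F₂.LeftExtension X₂}
    (h₁ : L₁.IsPointwiseLeftKanExtension) (h₂ : L₂.IsPointwiseLeftKanExtension)
    [∀ c₁ c₂, PreservesColimit₂ (CostructuredArrow.proj F₁ c₁ ⋙ X₁)
      (CostructuredArrow.proj F₂ c₂ ⋙ X₂) (curriedTensor V)] :
    (leftExtensionTensor L₁ L₂).IsPointwiseLeftKanExtension := fun ⟨c₁, c₂⟩ => by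
  let e := (CostructuredArrow.prodEquivalence F₁ F₂ c₁ c₂).symm
  refine IsColimit.ofWhiskerEquivalence e ?_
  let diagramIso : uncurry.obj (((whiskeringLeft₂ V).obj (CostructuredArrow.proj F₁ c₁ ⋙ X₁)).obj
      (CostructuredArrow.proj F₂ c₂ ⋙ X₂) |>.obj (curriedTensor V)) ≅
      e.functor ⋙ CostructuredArrow.proj (F₁.prod F₂) (c₁, c₂) ⋙ X₁.prod X₂ ⋙ tensor V :=
    NatIso.ofComponents (fun _ => Iso.refl _) fun f =>
      ((Category.comp_id _).trans (MonoidalCategory.tensorHom_def _ _).symm).trans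
        (Category.id_comp _).symm
  refine IsColimit.equivOfNatIsoOfIso diagramIso _
    (Cocone.whisker e.functor ((leftExtensionTensor L₁ L₂).coconeAt (c₁, c₂)))
    (Cocone.ext (Iso.refl _) fun ⟨f₁, f₂⟩ => ?_)
    (isColimitOfPreserves₂ (curriedTensor V) (h₁ c₁) (h₂ c₂))
  change (𝟙 _ ≫ (L₁.coconeAt c₁).ι.app f₁ ▷ _ ≫ _ ◁ (L₂.coconeAt c₂).ι.app f₂) ≫ 𝟙 _ =
    (L₁.hom.app f₁.left ⊗ₘ L₂.hom.app f₂.left) ≫ (L₁.right.map f₁.hom ⊗ₘ L₂.right.map f₂.hom)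
  rw [Category.comp_id, Category.id_comp, ← MonoidalCategory.tensorHom_def,
    tensorHom_comp_tensorHom]
  rfl

end ExternalProduct

section Terminal

variable {B C V : Type*} [Category* B] [Category* C] [Category* V] {F : B ⥤ C} {X : B ⥤ V}

def costructuredArrowMkIsTerminal {b : B} {c : C} (hb : IsTerminal b) (hc : IsTerminal c) :
    IsTerminal (CostructuredArrow.mk (hc.from (F.obj b))) :=
  IsTerminal.ofUniqueHom (fun _ => CostructuredArrow.homMk (hb.from _) (hc.hom_ext _ _))
    fun _ _ => CostructuredArrow.hom_ext _ _ (hb.hom_ext _ _)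

noncomputable def isTerminalLeftKanExtensionObj {L : F.LeftExtension X}
    (h : L.IsPointwiseLeftKanExtension) {b : B} {c : C} (hb : IsTerminal b) (hc : IsTerminal c)
    (hX : IsTerminal (X.obj b)) :
    IsTerminal (L.right.obj c) :=
  hX.ofIso ((colimitOfDiagramTerminal (costructuredArrowMkIsTerminal (F := F) hb hc)
    (CostructuredArrow.proj F c ⋙ X)).coconePointUniqueUpToIso (h c))

theorem preservesTerminal_of_isPointwiseLeftKanExtension [HasTerminal B] [HasTerminal C]
    [PreservesLimit (Functor.empty.{0} B) X] {L : F.LeftExtension X}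
    (h : L.IsPointwiseLeftKanExtension) : PreservesLimit (Functor.empty.{0} C) L.right :=
  preservesLimit_of_preserves_limit_cone terminalIsTerminal <|
    (isLimitMapConeEmptyConeEquiv _ _).symm <|
      isTerminalLeftKanExtensionObj h terminalIsTerminal terminalIsTerminal
        (terminalIsTerminal.isTerminalObj X _)

end Terminal

section Cartesian

variable {B C V : Type*} [Category* B] [Category* C] [Category* V]
  [CartesianMonoidalCategory B] [CartesianMonoidalCategory C] [CartesianMonoidalCategory V]
  {F : B ⥤ C} {X : B ⥤ V}

theorem compTwoSquare_hom_comp_prodComparison (L : F.LeftExtension X) :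
    (L.compTwoSquare (prodComparisonTwoSquare F)).hom ≫
      whiskerLeft (F.prod F) (prodComparisonTwoSquare L.right).natTrans =
    (prodComparisonTwoSquare X).natTrans ≫ (leftExtensionTensor L L).hom := by
  ext ⟨b₁, b₂⟩
  change (L.hom.app (b₁ ⊗ b₂) ≫ 𝟙 _ ≫
      L.right.map (CartesianMonoidalCategory.prodComparison F b₁ b₂) ≫ 𝟙 _) ≫
      CartesianMonoidalCategory.prodComparison L.right (F.obj b₁) (F.obj b₂) =
    CartesianMonoidalCategory.prodComparison X b₁ b₂ ≫ (L.hom.app b₁ ⊗ₘ L.hom.app b₂)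
  ext <;> simp [← Functor.map_comp]

instance isIso_prodComparisonTwoSquare_natTrans (G : C ⥤ V)
    [PreservesLimitsOfShape (Discrete WalkingPair) G] :
    IsIso (prodComparisonTwoSquare G).natTrans :=
  have (p : C × C) : IsIso ((prodComparisonTwoSquare G).natTrans.app p) :=
    inferInstanceAs (IsIso (CartesianMonoidalCategory.prodComparison G p.1 p.2))
  NatIso.isIso_of_isIso_app _

theorem preservesBinaryProducts_of_isIso_prodComparisonTwoSquare_natTrans (G : C ⥤ V)
    [IsIso (prodComparisonTwoSquare G).natTrans] :
    PreservesLimitsOfShape (Discrete WalkingPair) G :=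
  have (c₁ c₂ : C) : IsIso (CartesianMonoidalCategory.prodComparison G c₁ c₂) :=
    inferInstanceAs (IsIso ((prodComparisonTwoSquare G).natTrans.app (c₁, c₂)))
  preservesLimitsOfShape_discrete_walkingPair_of_isIso_prodComparison G

theorem preservesBinaryProducts_of_isPointwiseLeftKanExtension
    [PreservesLimitsOfShape (Discrete WalkingPair) X] {L : F.LeftExtension X}
    (h : L.IsPointwiseLeftKanExtension)
    [∀ c₁ c₂, PreservesColimit₂ (CostructuredArrow.proj F c₁ ⋙ X)
      (CostructuredArrow.proj F c₂ ⋙ X) (curriedTensor V)] :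
    PreservesLimitsOfShape (Discrete WalkingPair) L.right := by
  have lanAtTensor := (h.compTwoSquare (prodComparisonTwoSquare F)).isLeftKanExtension
  have tensorOfLans : ((leftExtensionTensor L L).right).IsLeftKanExtension
      ((prodComparisonTwoSquare X).natTrans ≫ (leftExtensionTensor L L).hom) :=
    (isLeftKanExtension_iff_of_iso₂ _ _ (asIso (prodComparisonTwoSquare X).natTrans) (Iso.refl _)
      (Category.comp_id _)).2 (isPointwiseLeftKanExtensionTensor h h).isLeftKanExtension
  have : IsIso (prodComparisonTwoSquare L.right).natTrans :=
    (isLeftKanExtension_iff_isIso _ (L.compTwoSquare (prodComparisonTwoSquare F)).hom _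
      (compTwoSquare_hom_comp_prodComparison L)).1 tensorOfLans
  exact preservesBinaryProducts_of_isIso_prodComparisonTwoSquare_natTrans L.right

theorem preservesFiniteProducts_of_isPointwiseLeftKanExtension [PreservesFiniteProducts X]
    {L : F.LeftExtension X} (h : L.IsPointwiseLeftKanExtension)
    [∀ c₁ c₂, PreservesColimit₂ (CostructuredArrow.proj F c₁ ⋙ X)
      (CostructuredArrow.proj F c₂ ⋙ X) (curriedTensor V)] :
    PreservesFiniteProducts L.right :=
  have := preservesBinaryProducts_of_isPointwiseLeftKanExtension h
  have := preservesTerminal_of_isPointwiseLeftKanExtension h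
  have := preservesLimitsOfShape_pempty_of_preservesTerminal L.right
  .of_preserves_binary_and_terminal L.right

end Cartesian

theorem statement13 {E : Type e} [Category.{w} E] [HasFiniteProducts E]
    [HasColimitsOfSize.{u, u} E]
    (hE : ∀ C : E, PreservesColimitsOfSize.{u, u} (prod.functor.obj C))
    {B : Type u} [SmallCategory B] [HasFiniteProducts B]
    {C : Type v} [Category.{u} C] (F : B ⥤ C) (X : B ⥤ E)
    [PreservesFiniteProducts X] :
    PreservesFiniteProducts (F.pointwiseLeftKanExtension X) := by
  let := CartesianMonoidalCategory.ofHasFiniteProducts (C := B)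
  let := CartesianMonoidalCategory.ofHasFiniteProducts (C := E)
  let := BraidedCategory.ofCartesianMonoidalCategory (C := E)
  have (A : E) : PreservesColimitsOfSize.{u, u} (tensorLeft A) :=
    preservesColimits_of_natIso (tensorLeftIsoProd A).symm
  have lanYoneda := uliftYoneda.{u}.pointwiseLeftKanExtensionIsPointwiseLeftKanExtension X
  have := preservesFiniteProducts_of_isPointwiseLeftKanExtension lanYoneda
  let factorization := restrictedULiftYonedaCompIso
    (F.pointwiseLeftKanExtensionIsPointwiseLeftKanExtension X) lanYoneda
  exact ⟨fun _ => preservesLimitsOfShape_of_natIso factorization⟩
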